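/- arXiv:2502.14281 — 2 statements merged into one kernel-verified Lean document; each statement's English description precedes it below -/
import Mathlib

section
/- Lemma 1 (algebraic core of Theorem 2: diagonal Student KL bound is at most C₁ + C₂·Δ). Under assumptions (A1)–(A3), with α = √(νλ)/L, the following inequality holds: (1/2)·log( (∏_{j=1}^m σ₀²ⱼ) / (∏_{j=1}^m σ₁²ⱼ) ) + ((ν+m)/2)·log( 1 + (1/(ν−2))·∑_{j=1}^m σ₁²ⱼ/σ₀²ⱼ + (1/ν)·∑_{j=1}^m (μ₁ⱼ − μ₀ⱼ)²/σ₀²ⱼ ) ≤ ((ν+m)/2)·( M·√m·α / (2(ν−2)) ) + ( m·M/(2e) + (ν+m)·√m/(2α) )·Δ. (The left-hand side is the part, not involving digamma terms, of the known upper bound on the Kullback–Leibler divergence between two m-dimensional Student-t distributions with common degrees of freedom ν, means μ₁ and μ₀, and diagonal scale matrices diag(σ₁²) and diag(σ₀²); since the digamma terms appear identically on both sides of the paper's bound, this inequality establishes that the KL divergence between the two proposal distributions is at most C₁ + C₂·Δ with C₁ = ((ν+m)/2)·( M√m·α/(2(ν−2)) − Ψ((ν+m)/2) + Ψ(ν/2)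 ) and C₂ = mM/(2e) + (ν+m)√m/(2α).) -/
open Real Finset

/-!
The determinant term is bounded coordinatewise by `log y ≤ y / e` with `y = σ₀²ⱼ/σ₁²ⱼ ≤ MΔ`.

For the other logarithm, put `c = M√m·α / (2(ν-2))` and `x = √m·Δ/α`. The assumptions bound its
argument by `1 + mMΔ/(ν-2) + Δ²/α² = 1 + 2cx + x²/m`, which is at most `1 + (c + x)²`, and
`1 + s² ≤ exp s` for `s ≥ 0` turns this into the bound `c + x`.
-/

lemma log_le_div_exp_one {y : ℝ} (hy : 0 < y) : Real.log y ≤ y / Real.exp 1 := by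
  have he := Real.exp_pos 1
  have h := Real.log_le_sub_one_of_pos (div_pos hy he)
  rw [Real.log_div hy.ne' he.ne', Real.log_exp] at h
  linarith

lemma one_add_sq_le_exp {s : ℝ} (hs : 0 ≤ s) : 1 + s ^ 2 ≤ Real.exp s := by
  have h := Real.sum_le_exp_of_nonneg hs 4
  simp only [Finset.sum_range_succ, Finset.sum_range_zero, Nat.factorial] at h
  norm_num at h
  -- The cubic Taylor polynomial exceeds `1 + s²` by `s (1 - s/2 + s²/6)`.
  nlinarith [mul_nonneg hs (sq_nonneg (s - 3 / 2))]

/-- Lemma 1 (algebraic core of Theorem 2): under (A1)–(A3) with `α = √(νλ)/L`,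
the non-digamma part of the Student-t KL upper bound is at most
`((ν+m)/2)·(M√m·α/(2(ν−2))) + (mM/(2e) + (ν+m)√m/(2α))·Δ`. -/
theorem student_kl_core_bound
    (m : ℕ) (hm : 1 ≤ m) (ν M L lam Δ : ℝ)
    (hν : 2 < ν) (hM : 0 < M) (hL : 0 < L) (hlam : 0 < lam) (hΔ : 0 < Δ)
    (σ₀sq σ₁sq μ₀ μ₁ : Fin m → ℝ)
    (hσ₀ : ∀ j, 0 < σ₀sq j) (hσ₁ : ∀ j, 0 < σ₁sq j)
    (hA1a : ∀ j, σ₀sq j / σ₁sq j ≤ M * Δ) (hA1b : ∀ j, σ₁sq j / σ₀sq j ≤ M * Δ)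
    (hA2 : Real.sqrt (∑ j, (μ₀ j - μ₁ j) ^ 2) ≤ L * Δ)
    (hA3 : ∀ j, lam ≤ σ₀sq j)
    (α : ℝ) (hα : α = Real.sqrt (ν * lam) / L) :
    (1 / 2) * Real.log ((∏ j, σ₀sq j) / (∏ j, σ₁sq j))
      + ((ν + m) / 2) * Real.log (1 + (1 / (ν - 2)) * ∑ j, σ₁sq j / σ₀sq j
          + (1 / ν) * ∑ j, (μ₁ j - μ₀ j) ^ 2 / σ₀sq j)
      ≤ ((ν + m) / 2) * (M * Real.sqrt m * α / (2 * (ν - 2)))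
        + (m * M / (2 * Real.exp 1) + (ν + m) * Real.sqrt m / (2 * α)) * Δ := by
  have hν2 : 0 < ν - 2 := by linarith
  have hν0 : 0 < ν := by linarith
  have hαpos : 0 < α := by rw [hα]; positivity
  have hαsq : α ^ 2 = ν * lam / L ^ 2 := by
    rw [hα, div_pow, Real.sq_sqrt (by positivity)]
  have hm1 : (1 : ℝ) ≤ m := by exact_mod_cast hm
  have hsm : Real.sqrt m ^ 2 = m := Real.sq_sqrt (by positivity)
  have hdet : Real.log ((∏ j, σ₀sq j) / (∏ j, σ₁sq j)) ≤ m * (M * Δ / Real.exp 1) := by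
    rw [← Finset.prod_div_distrib,
      Real.log_prod (fun j _ => (div_pos (hσ₀ j) (hσ₁ j)).ne')]
    calc ∑ j, Real.log (σ₀sq j / σ₁sq j) ≤ ∑ _j : Fin m, M * Δ / Real.exp 1 := by
          refine Finset.sum_le_sum fun j _ => ?_
          refine (log_le_div_exp_one (div_pos (hσ₀ j) (hσ₁ j))).trans ?_
          have := hA1a j
          gcongr
      _ = m * (M * Δ / Real.exp 1) := by simp
  have hvar : ∑ j, σ₁sq j / σ₀sq j ≤ m * (M * Δ) := by
    calc ∑ j, σ₁sq j / σ₀sq j ≤ ∑ _j : Fin m, M * Δ := Finset.sum_le_sum fun j _ => hA1b j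
      _ = m * (M * Δ) := by simp
  have hmean : ∑ j, (μ₁ j - μ₀ j) ^ 2 / σ₀sq j ≤ (L * Δ) ^ 2 / lam := by
    calc ∑ j, (μ₁ j - μ₀ j) ^ 2 / σ₀sq j ≤ ∑ j, (μ₀ j - μ₁ j) ^ 2 / lam := by
          refine Finset.sum_le_sum fun j _ => ?_
          rw [← neg_sub (μ₀ j), neg_sq]
          have := hA3 j
          gcongr
      _ = (∑ j, (μ₀ j - μ₁ j) ^ 2) / lam := by rw [Finset.sum_div]
      _ ≤ (L * Δ) ^ 2 / lam := by
          have := (Real.sqrt_le_left (by positivity)).mp hA2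
          gcongr
  have hvar0 : 0 ≤ ∑ j, σ₁sq j / σ₀sq j :=
    Finset.sum_nonneg fun j _ => (div_pos (hσ₁ j) (hσ₀ j)).le
  have hmean0 : 0 ≤ ∑ j, (μ₁ j - μ₀ j) ^ 2 / σ₀sq j :=
    Finset.sum_nonneg fun j _ => div_nonneg (sq_nonneg _) (hσ₀ j).le
  obtain ⟨c, hc⟩ : ∃ c, c = M * Real.sqrt m * α / (2 * (ν - 2)) := ⟨_, rfl⟩
  obtain ⟨x, hx⟩ : ∃ x, x = Real.sqrt m * Δ / α := ⟨_, rfl⟩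
  have hc0 : 0 ≤ c := by rw [hc]; positivity
  have hx0 : 0 ≤ x := by rw [hx]; positivity
  have hcx : 1 / (ν - 2) * (m * (M * Δ)) = 2 * c * x := by
    rw [hc, hx]
    nth_rewrite 1 [← hsm]
    field_simp
  have hxx : 1 / ν * ((L * Δ) ^ 2 / lam) ≤ x ^ 2 := by
    have h1 : 1 / ν * ((L * Δ) ^ 2 / lam) = Δ ^ 2 / α ^ 2 := by
      rw [hαsq]; field_simp
    rw [h1, hx, div_pow, mul_pow, hsm]
    gcongr
    nlinarith [sq_nonneg Δ]
  have hlog : Real.log (1 + (1 / (ν - 2)) * ∑ j, σ₁sq j / σ₀sq j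
      + (1 / ν) * ∑ j, (μ₁ j - μ₀ j) ^ 2 / σ₀sq j) ≤ c + x := by
    rw [Real.log_le_iff_le_exp (by positivity)]
    refine le_trans ?_ (one_add_sq_le_exp (add_nonneg hc0 hx0))
    have h1 := mul_le_mul_of_nonneg_left hvar (one_div_pos.mpr hν2).le
    have h2 := mul_le_mul_of_nonneg_left hmean (one_div_pos.mpr hν0).le
    nlinarith [sq_nonneg c]
  have hfin := mul_le_mul_of_nonneg_left hlog (show 0 ≤ (ν + m) / 2 by positivity)
  have hrhs : ((ν + m) / 2) * c
      + (m * M / (2 * Real.exp 1) + (ν + m) * Real.sqrt m / (2 * α)) * Δ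
      = 1 / 2 * (m * (M * Δ / Real.exp 1)) + (ν + m) / 2 * (c + x) := by
    rw [hx]; field_simp; ring
  rw [← hc, hrhs]
  linarith
end

section
/- Corollary (Appendix C: Gaussian proposals give an O(m·Δ²) KL bound). Let m ≥ 1 be an integer and M > 0, L > 0, λ > 0, Δ > 0 be reals. Let σ₀², σ₁² : Fin m → ℝ be strictly positive vectors and μ₀, μ₁ : Fin m → ℝ satisfying assumptions (A1)–(A3). Let P₁ = ⊗_{j=1}^m N(μ₁ⱼ, σ₁²ⱼ) and P₀ = ⊗_{j=1}^m N(μ₀ⱼ, σ₀²ⱼ) be the corresponding product Gaussian measures on ℝᵐ. Then D_KL(P₁ ‖ P₀) ≤ (3·m·M/2)·Δ − m/2 + (m·L²/λ)·Δ². In particular, the KL divergence between the two Gaussian proposal distributions is bounded by a quantity of order m·Δ² (treating M, L, λ as constants). -/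
/-!
The Radon–Nikodym derivative of a product of probability measures that have densities is the
product of the coordinate densities, so the log-likelihood ratio of two product Gaussians is a sum
of one-dimensional ones and its integral can be computed coordinate by coordinate. With
`v₀ = σ₀²ⱼ`, `v₁ = σ₁²ⱼ`, the `j`-th coordinate contributes
`(log (v₀ / v₁) - 1 + (v₁ + (μ₁ⱼ - μ₀ⱼ)²) / v₀) / 2`. By `log t ≤ t - 1` and (A1), (A3) this is at
most `M Δ - 1 + (μ₁ⱼ - μ₀ⱼ)² / (2 λ)`, and summing with (A2) gives
`m M Δ - m + L² Δ² / (2 λ)`, which is stronger than the stated bound.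
-/

open MeasureTheory ProbabilityTheory Classical Real Finset

/-- Kullback–Leibler divergence `D_KL(P ‖ Q)`: equal to `∫ log (dP/dQ) dP` when
`P ≪ Q` and the integral is well defined, and `+∞` otherwise. -/
noncomputable def klDiv {X : Type*} [MeasurableSpace X] (μ ν : Measure X) : EReal :=
  if μ ≪ ν ∧ Integrable (fun x => Real.log (μ.rnDeriv ν x).toReal) μ then
    ((∫ x, Real.log (μ.rnDeriv ν x).toReal ∂μ : ℝ) : EReal)
  else ⊤

/-- A product of probability measures with densities has the product density. -/
lemma pi_withDensity_of_prob {ι : Type*} [Fintype ι] (ν : ι → Measure ℝ)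
    [∀ i, IsProbabilityMeasure (ν i)] (f : ι → ℝ → ENNReal) (hf : ∀ i, Measurable (f i))
    [∀ i, IsProbabilityMeasure ((ν i).withDensity (f i))] :
    Measure.pi (fun i => (ν i).withDensity (f i))
      = (Measure.pi ν).withDensity (fun x => ∏ i, f i (x i)) := by
  apply Measure.pi_eq
  intro s hs
  rw [withDensity_apply _ (MeasurableSet.univ_pi hs),
    ← lintegral_indicator (MeasurableSet.univ_pi hs)]
  have hind : ∀ x : ι → ℝ, (Set.univ.pi s).indicator (fun x => ∏ i, f i (x i)) x
      = ∏ i, (s i).indicator (f i) (x i) := by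
    intro x
    by_cases hx : x ∈ Set.univ.pi s
    · rw [Set.indicator_of_mem hx]
      exact Finset.prod_congr rfl fun i _ =>
        (Set.indicator_of_mem (hx i (Set.mem_univ i)) _).symm
    · rw [Set.indicator_of_notMem hx]
      simp only [Set.mem_pi, Set.mem_univ, true_imp_iff, not_forall] at hx
      obtain ⟨i, hi⟩ := hx
      exact (Finset.prod_eq_zero (Finset.mem_univ i) (Set.indicator_of_notMem hi _)).symm
  have hmeas : ∀ i, Measurable ((s i).indicator (f i)) := fun i => (hf i).indicator (hs i)
  simp_rw [hind]
  rw [lintegral_prod_eq_prod_lintegral_of_indepFun Finset.univ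
    (fun i (x : ι → ℝ) => (s i).indicator (f i) (x i))
    (iIndepFun_pi fun i => (hmeas i).aemeasurable)
    (fun i => (hmeas i).comp (measurable_pi_apply i))]
  refine Finset.prod_congr rfl fun i _ => ?_
  rw [(measurePreserving_eval ν i).lintegral_comp (hmeas i), lintegral_indicator (hs i),
    withDensity_apply _ (hs i)]

/-- The log-likelihood ratio of `N(a₁, v₁)` against `N(a₀, v₀)`. -/
noncomputable def gaussLLR (a₀ a₁ v₀ v₁ x : ℝ) : ℝ :=
  Real.log (v₀ / v₁) / 2 - (x - a₁) ^ 2 / (2 * v₁) + (x - a₀) ^ 2 / (2 * v₀)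

lemma measurable_gaussLLR (a₀ a₁ v₀ v₁ : ℝ) : Measurable (gaussLLR a₀ a₁ v₀ v₁) := by
  unfold gaussLLR
  fun_prop

lemma gaussianReal_eq_withDensity_gaussLLR (a₀ a₁ : ℝ) {v₀ v₁ : NNReal} (h₀ : 0 < v₀)
    (h₁ : 0 < v₁) :
    gaussianReal a₁ v₁ = (gaussianReal a₀ v₀).withDensity
      (fun x => ENNReal.ofReal (Real.exp (gaussLLR a₀ a₁ v₀ v₁ x))) := by
  rw [gaussianReal_of_var_ne_zero _ h₀.ne', gaussianReal_of_var_ne_zero _ h₁.ne',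
    ← withDensity_mul _ (measurable_gaussianPDF _ _)
      (measurable_gaussLLR _ _ _ _).exp.ennreal_ofReal]
  congr 1
  ext x
  have p₀ : (0 : ℝ) < v₀ := h₀
  have p₁ : (0 : ℝ) < v₁ := h₁
  simp only [Pi.mul_apply, gaussianPDF]
  rw [← ENNReal.ofReal_mul (gaussianPDFReal_nonneg _ _ _)]
  congr 1
  have hlog : Real.exp (Real.log (v₀ / v₁) / 2) = √(2 * π * v₀) / √(2 * π * v₁) := by
    rw [← Real.log_sqrt (by positivity), Real.exp_log (by positivity),
      ← Real.sqrt_div (by positivity)]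
    congr 1
    field_simp
  have hsplit : gaussLLR a₀ a₁ v₀ v₁ x = Real.log (v₀ / v₁) / 2
      + (-(x - a₁) ^ 2 / (2 * v₁) - -(x - a₀) ^ 2 / (2 * v₀)) := by
    unfold gaussLLR
    ring
  rw [hsplit, Real.exp_add, Real.exp_sub, hlog, gaussianPDFReal, gaussianPDFReal]
  have q₀ : √(2 * π * v₀) ≠ 0 := by positivity
  field_simp

lemma integrable_sq_sub_gaussianReal (a b : ℝ) (v : NNReal) :
    Integrable (fun x => (x - b) ^ 2) (gaussianReal a v) :=
  ((memLp_id_gaussianReal (μ := a) (v := v) 2).sub (memLp_const b)).integrable_sq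

lemma integral_sq_sub_gaussianReal (a b : ℝ) (v : NNReal) :
    ∫ x, (x - b) ^ 2 ∂gaussianReal a v = v + (a - b) ^ 2 := by
  have hvar : ∫ x, (x - a) ^ 2 ∂gaussianReal a v = v := by
    have h := variance_fun_id_gaussianReal (μ := a) (v := v)
    rw [variance_eq_integral (by fun_prop), integral_id_gaussianReal] at h
    exact h
  have hid : Integrable (fun x : ℝ => x) (gaussianReal a v) :=
    (memLp_id_gaussianReal (μ := a) (v := v) 1).integrable (by simp)
  have hlin : ∫ x, (2 * (a - b) * x + ((a - b) ^ 2 - 2 * (a - b) * a)) ∂gaussianReal a v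
      = (a - b) ^ 2 := by
    rw [integral_add (hid.const_mul _) (integrable_const _), integral_const_mul,
      integral_id_gaussianReal]
    simp
  have hlin_int : Integrable
      (fun x => 2 * (a - b) * x + ((a - b) ^ 2 - 2 * (a - b) * a)) (gaussianReal a v) :=
    (hid.const_mul _).add (integrable_const _)
  calc ∫ x, (x - b) ^ 2 ∂gaussianReal a v
      = ∫ x, ((x - a) ^ 2 + (2 * (a - b) * x + ((a - b) ^ 2 - 2 * (a - b) * a)))
          ∂gaussianReal a v := by
        congr 1
        ext x
        ring
    _ = v + (a - b) ^ 2 := by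
        rw [integral_add (integrable_sq_sub_gaussianReal a a v) hlin_int, hvar, hlin]

lemma integrable_gaussLLR (a₀ a₁ v₀ v₁ : ℝ) (v : NNReal) :
    Integrable (gaussLLR a₀ a₁ v₀ v₁) (gaussianReal a₁ v) :=
  ((integrable_const _).sub ((integrable_sq_sub_gaussianReal a₁ a₁ v).div_const _)).add
    ((integrable_sq_sub_gaussianReal a₁ a₀ v).div_const _)

lemma integral_gaussLLR (a₀ a₁ v₀ : ℝ) {v₁ : NNReal} (h₁ : 0 < v₁) :
    ∫ x, gaussLLR a₀ a₁ v₀ v₁ x ∂gaussianReal a₁ v₁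
      = Real.log (v₀ / v₁) / 2 - 1 / 2 + (v₁ + (a₁ - a₀) ^ 2) / (2 * v₀) := by
  have p₁ : (0 : ℝ) < v₁ := h₁
  have i₁ := (integrable_sq_sub_gaussianReal a₁ a₁ v₁).div_const (2 * (v₁ : ℝ))
  have i₂ : Integrable (fun x => Real.log (v₀ / v₁) / 2 - (x - a₁) ^ 2 / (2 * (v₁ : ℝ)))
      (gaussianReal a₁ v₁) := (integrable_const _).sub i₁
  unfold gaussLLR
  rw [integral_add i₂
      ((integrable_sq_sub_gaussianReal a₁ a₀ v₁).div_const _),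
    integral_sub (integrable_const _) i₁, integral_div, integral_div, integral_div,
    integral_sq_sub_gaussianReal, integral_sq_sub_gaussianReal]
  simp
  field_simp

/-- Corollary (Appendix C): with Gaussian proposals satisfying (A1)–(A3), the
KL divergence between the two product Gaussian measures satisfies
`D_KL(P₁ ‖ P₀) ≤ (3mM/2)·Δ − m/2 + (mL²/λ)·Δ²`, a bound of order `m·Δ²`. -/
theorem gaussian_proposal_kl_bound
    (m : ℕ) (hm : 1 ≤ m) (M L lam Δ : ℝ)
    (hM : 0 < M) (hL : 0 < L) (hlam : 0 < lam) (hΔ : 0 < Δ)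
    (σ₀sq σ₁sq μ₀ μ₁ : Fin m → ℝ)
    (hσ₀ : ∀ j, 0 < σ₀sq j) (hσ₁ : ∀ j, 0 < σ₁sq j)
    (hA1a : ∀ j, σ₀sq j / σ₁sq j ≤ M * Δ) (hA1b : ∀ j, σ₁sq j / σ₀sq j ≤ M * Δ)
    (hA2 : Real.sqrt (∑ j, (μ₀ j - μ₁ j) ^ 2) ≤ L * Δ)
    (hA3 : ∀ j, lam ≤ σ₀sq j) :
    klDiv
        (Measure.pi fun j => gaussianReal (μ₁ j) ⟨σ₁sq j, (hσ₁ j).le⟩)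
        (Measure.pi fun j => gaussianReal (μ₀ j) ⟨σ₀sq j, (hσ₀ j).le⟩)
      ≤ ((3 * m * M / 2 * Δ - m / 2 + m * L ^ 2 / lam * Δ ^ 2 : ℝ) : EReal) := by
  set v₀ : Fin m → NNReal := fun j => ⟨σ₀sq j, (hσ₀ j).le⟩ with hv₀
  set v₁ : Fin m → NNReal := fun j => ⟨σ₁sq j, (hσ₁ j).le⟩ with hv₁
  have p₀ : ∀ j, 0 < v₀ j := hσ₀
  have p₁ : ∀ j, 0 < v₁ j := hσ₁
  set P₁ := Measure.pi fun j => gaussianReal (μ₁ j) (v₁ j) with hP₁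
  set P₀ := Measure.pi fun j => gaussianReal (μ₀ j) (v₀ j) with hP₀
  let g : Fin m → ℝ → ℝ := fun j => gaussLLR (μ₀ j) (μ₁ j) (σ₀sq j) (σ₁sq j)
  let F : (Fin m → ℝ) → ENNReal := fun x => ∏ j, ENNReal.ofReal (Real.exp (g j (x j)))
  have hgm : ∀ j, Measurable (g j) := fun j => measurable_gaussLLR _ _ _ _
  have hFm : Measurable F := Finset.measurable_prod _ fun j _ =>
    ((hgm j).comp (measurable_pi_apply j)).exp.ennreal_ofReal
  have hdens : ∀ j, gaussianReal (μ₁ j) (v₁ j) = (gaussianReal (μ₀ j) (v₀ j)).withDensity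
      (fun x => ENNReal.ofReal (Real.exp (g j x))) := fun j =>
    gaussianReal_eq_withDensity_gaussLLR _ _ (p₀ j) (p₁ j)
  have hP : P₁ = P₀.withDensity F := by
    have (j : Fin m) : IsProbabilityMeasure ((gaussianReal (μ₀ j) (v₀ j)).withDensity
        (fun x => ENNReal.ofReal (Real.exp (g j x)))) := by
      rw [← hdens j]
      infer_instance
    rw [hP₁, funext hdens]
    exact pi_withDensity_of_prob _ _ fun j => (hgm j).exp.ennreal_ofReal
  have hac : P₁ ≪ P₀ := hP ▸ withDensity_absolutelyContinuous _ _
  have hlog : (fun x => Real.log (P₁.rnDeriv P₀ x).toReal) =ᵐ[P₁] fun x => ∑ j, g j (x j) := by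
    have h := Measure.rnDeriv_withDensity P₀ hFm
    rw [← hP] at h
    filter_upwards [hac.ae_le h] with x hx
    rw [hx, ENNReal.toReal_prod]
    simp_rw [ENNReal.toReal_ofReal (Real.exp_pos _).le]
    rw [← Real.exp_sum, Real.log_exp]
  have hgi : ∀ j, Integrable (g j) (gaussianReal (μ₁ j) (v₁ j)) := fun j =>
    integrable_gaussLLR _ _ _ _ _
  have hgi' : ∀ j, Integrable (fun x : Fin m → ℝ => g j (x j)) P₁ := fun j =>
    integrable_comp_eval (μ := fun j => gaussianReal (μ₁ j) (v₁ j)) (hgi j)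
  have hint : ∫ x, Real.log (P₁.rnDeriv P₀ x).toReal ∂P₁
      = ∑ j, (Real.log (σ₀sq j / σ₁sq j) / 2 - 1 / 2
          + (σ₁sq j + (μ₁ j - μ₀ j) ^ 2) / (2 * σ₀sq j)) := by
    rw [integral_congr_ae hlog, integral_finsetSum _ fun j _ => hgi' j]
    refine Finset.sum_congr rfl fun j _ => ?_
    rw [hP₁, integral_comp_eval (μ := fun j => gaussianReal (μ₁ j) (v₁ j))
      (hgi j).aestronglyMeasurable]
    exact integral_gaussLLR (μ₀ j) (μ₁ j) (σ₀sq j) (p₁ j)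
  rw [klDiv, if_pos ⟨hac, (integrable_congr hlog).2 (integrable_finsetSum _ fun j _ => hgi' j)⟩,
    EReal.coe_le_coe_iff, hint]
  have hterm : ∀ j, Real.log (σ₀sq j / σ₁sq j) / 2 - 1 / 2
      + (σ₁sq j + (μ₁ j - μ₀ j) ^ 2) / (2 * σ₀sq j)
      ≤ (M * Δ - 1) + (μ₀ j - μ₁ j) ^ 2 / (2 * lam) := by
    intro j
    have h1 := Real.log_le_sub_one_of_pos (div_pos (hσ₀ j) (hσ₁ j))
    have h2 : (μ₁ j - μ₀ j) ^ 2 / (2 * σ₀sq j) ≤ (μ₀ j - μ₁ j) ^ 2 / (2 * lam) := by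
      rw [show (μ₁ j - μ₀ j) ^ 2 = (μ₀ j - μ₁ j) ^ 2 by ring]
      have := hA3 j
      gcongr
    have h3 : (σ₁sq j + (μ₁ j - μ₀ j) ^ 2) / (2 * σ₀sq j)
        = (σ₁sq j / σ₀sq j) / 2 + (μ₁ j - μ₀ j) ^ 2 / (2 * σ₀sq j) := by
      have := hσ₀ j
      field_simp
    linarith [hA1a j, hA1b j]
  have hsq : ∑ j, (μ₀ j - μ₁ j) ^ 2 ≤ (L * Δ) ^ 2 :=
    (Real.sqrt_le_left (by positivity)).1 hA2
  have hm' : (1 : ℝ) ≤ m := by exact_mod_cast hm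
  have hmain : ∑ j, (Real.log (σ₀sq j / σ₁sq j) / 2 - 1 / 2
      + (σ₁sq j + (μ₁ j - μ₀ j) ^ 2) / (2 * σ₀sq j))
      ≤ m * (M * Δ - 1) + (L * Δ) ^ 2 / (2 * lam) := by
    refine (Finset.sum_le_sum fun j _ => hterm j).trans ?_
    rw [Finset.sum_add_distrib, ← Finset.sum_div]
    simp only [Finset.sum_const, Finset.card_univ, Fintype.card_fin, nsmul_eq_mul]
    gcongr
  have hlast : (L * Δ) ^ 2 / (2 * lam) ≤ m * L ^ 2 / lam * Δ ^ 2 := by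
    rw [show m * L ^ 2 / lam * Δ ^ 2 = (2 * m) * ((L * Δ) ^ 2 / (2 * lam)) by field_simp]
    exact le_mul_of_one_le_left (by positivity) (by linarith)
  have hMΔ : 0 ≤ m * (M * Δ) := by positivity
  linarith
end
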